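/- (Per-pair bound from the proof of Lemma 2.3.) Fix an initial two-item configuration b₀ and let σ be any finite Boolean request sequence. Let w(σ) = (W(σ, true) + W(σ, false))/2, and let OPT₂(σ) be the minimum, over all sequences of configurations ρ₀, ρ₁, …, ρ_T with ρ₀ = b₀ (T = length of σ), of Σ_{t=1}^T ( (access cost of σ_t in ρ_{t−1}) + d(ρ_{t−1}, ρ_t) ). Then w(σ) − 1/2 ≤ OPT₂(σ). -/

import Mathlib

/-!
The work function bounds every schedule from below: `W b₀ σ b ≤ c` whenever some schedule serves
`σ` at cost `c` and ends in `b` (`Wrev_le_add_cost2`, by following the schedule through the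
recursion). The work function is also 1-Lipschitz in the configuration (`Wrev_lipschitz`), so for
an optimal schedule ending in `b` the two values `W b₀ σ true` and `W b₀ σ false` are at most
`OPT2 b₀ σ` and `OPT2 b₀ σ + 1` in some order; their average is at most `OPT2 b₀ σ + 1 / 2`.
-/

/-- Access cost of a request `r` in a two-item configuration `b`. -/
def acc2 (r b : Bool) : ℕ := if b = r then 0 else 1

/-- Reordering cost between two-item configurations. -/
def d2 (b b' : Bool) : ℕ := if b = b' then 0 else 1

/-- Auxiliary work function, processing the request sequence from the most
    recent request (head) to the oldest one. -/
def Wrev (b₀ : Bool) : List Bool → Bool → ℕ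
  | [], b => d2 b₀ b
  | r :: τ, b =>
      min (Wrev b₀ τ true + acc2 r true + d2 true b)
          (Wrev b₀ τ false + acc2 r false + d2 false b)

/-- The two-item work function: `W b₀ σ b` satisfies `W b₀ [] b = d2 b₀ b` and
    `W b₀ (σ ++ [r]) b = min over b' of (W b₀ σ b' + acc2 r b' + d2 b' b)`. -/
def W (b₀ : Bool) (σ : List Bool) (b : Bool) : ℕ := Wrev b₀ σ.reverse b

/-- Cost of serving the two-item request sequence `σ` starting at time `t`,
    using the schedule of configurations `ρ`. -/
def cost2 (ρ : ℕ → Bool) : List Bool → ℕ → ℕ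
  | [], _ => 0
  | r :: σ, t => acc2 r (ρ t) + d2 (ρ t) (ρ (t + 1)) + cost2 ρ σ (t + 1)

/-- Two-item optimal cost, starting from initial configuration `b₀`. -/
noncomputable def OPT2 (b₀ : Bool) (σ : List Bool) : ℕ :=
  sInf {c | ∃ ρ : ℕ → Bool, ρ 0 = b₀ ∧ c = cost2 ρ σ 0}

theorem Wrev_lipschitz (b₀ : Bool) (τ : List Bool) (b b' : Bool) :
    Wrev b₀ τ b ≤ Wrev b₀ τ b' + 1 := by
  cases τ with
  | nil => cases b₀ <;> cases b <;> cases b' <;> simp [Wrev, d2]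
  | cons r τ => cases b <;> cases b' <;> simp [Wrev, d2] <;> omega

theorem Wrev_cons_le (b₀ r : Bool) (τ : List Bool) (b b' : Bool) :
    Wrev b₀ (r :: τ) b ≤ Wrev b₀ τ b' + acc2 r b' + d2 b' b := by
  cases b'
  · exact min_le_right _ _
  · exact min_le_left _ _

/-- Here `τ` is the past, most recent request first, and `σ` the future, served by `ρ` from
time `t` on. -/
theorem Wrev_le_add_cost2 (b₀ : Bool) (ρ : ℕ → Bool) (σ : List Bool) :
    ∀ (τ : List Bool) (t : ℕ),
      Wrev b₀ (σ.reverse ++ τ) (ρ (t + σ.length)) ≤ Wrev b₀ τ (ρ t) + cost2 ρ σ t := by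
  induction σ with
  | nil => intro τ t; simp [cost2]
  | cons r σ ih =>
    intro τ t
    have h₁ := ih (r :: τ) (t + 1)
    have h₂ := Wrev_cons_le b₀ r τ (ρ (t + 1)) (ρ t)
    have h₃ : t + 1 + σ.length = t + (r :: σ).length := by simp; omega
    rw [h₃] at h₁
    simp only [List.reverse_cons, List.append_assoc, List.singleton_append, cost2]
    omega

/-- Per-pair bound from the proof of Lemma 2.3:
    `w(σ) − 1/2 ≤ OPT₂(σ)` where `w(σ) = (W(σ,true) + W(σ,false))/2`. -/
theorem per_pair_bound (b₀ : Bool) (σ : List Bool) :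
    ((W b₀ σ true : ℚ) + (W b₀ σ false : ℚ)) / 2 - 1 / 2 ≤ (OPT2 b₀ σ : ℚ) := by
  -- The set of costs is nonempty, so its infimum is the cost of an actual schedule.
  obtain ⟨ρ, h0, hρ⟩ : OPT2 b₀ σ ∈ {c | ∃ ρ : ℕ → Bool, ρ 0 = b₀ ∧ c = cost2 ρ σ 0} :=
    Nat.sInf_mem ⟨_, fun _ => b₀, rfl, rfl⟩
  have h := Wrev_le_add_cost2 b₀ ρ σ [] 0
  have hstart : Wrev b₀ [] (ρ 0) = 0 := by simp [Wrev, d2, h0]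
  rw [hstart, ← hρ, List.append_nil] at h
  have key : W b₀ σ true + W b₀ σ false ≤ 2 * OPT2 b₀ σ + 1 := by
    have h₁ := Wrev_lipschitz b₀ σ.reverse true false
    have h₂ := Wrev_lipschitz b₀ σ.reverse false true
    unfold W
    cases hb : ρ (0 + σ.length) <;> rw [hb] at h <;> omega
  have key' : (W b₀ σ true : ℚ) + W b₀ σ false ≤ 2 * OPT2 b₀ σ + 1 := by exact_mod_cast key
  linarith
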